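/- Let φ be a 3-CNF formula with v variables and m ≥ 1 clauses in which the three literals of every clause are on pairwise distinct variables, let n = v + 3m, and let Q(φ) be the query set of the single-count black-peg construction. Then a code s : P → Fin 2 satisfies α(s, g) = r for every (g, r) ∈ Q(φ) if and only if it satisfies all of the corresponding full Mastermind queries, namely: α(s, χ_∅) = n and β(s, χ_∅) − α(s, χ_∅) = 0; for each of the n variables w, α(s, χ_{{w,w̄}}) = n and β(s, χ_{{w,w̄}}) − α(s, χ_{{w,w̄}}) = 2; for each clause C_i, α(s, g) = n + 1 and β(s, g) − α(s, g) = 4 for the type-(3) guess g, and α(s, g) = n + 1 and β(s, g) − α(s, g) = 2 for the type-(4) guess g. Consequently the two query sets have exactly the same set of solutions. -/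

import Mathlib

/-!
The first query says that `s` has `n = v + 3m` zeros, hence, as there are `2n` positions, also `n`
ones. For such a balanced code and any `S` with `|S| ≤ n`, the value `β(s, χ_S)` is `n + |S|`
regardless of `s` (`betaCount_chi`): permuting `χ_S` gives the codes `χ_T` with `|T| = |S|`, and
`χ_T` agrees with `s` on the zeros of `s` outside `T` and the ones of `s` inside `T`, which is at
most `n + |S|`, with equality when `T` lies inside the ones of `s`. So each white-peg score is
determined by the black-peg score and `|S| ∈ {0, 2, 5, 3}`. The condition `|S| ≤ n` holds since a
clause exists and uses three distinct variables, so that `n ≥ 3 + 3`.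
-/

/-- `alphaCount x y` is the number of positions at which the codes `x` and `y` agree. -/
def alphaCount {P K : Type*} [Fintype P] [DecidableEq K] (x y : P → K) : ℕ :=
  (Finset.univ.filter fun i => x i = y i).card

/-- `betaCount x y` is the maximum of `alphaCount x (y ∘ σ)` over all permutations `σ`. -/
def betaCount {P K : Type*} [Fintype P] [DecidableEq P] [DecidableEq K] (x y : P → K) : ℕ :=
  Finset.univ.sup fun σ : Equiv.Perm P => alphaCount x (y ∘ σ)

/-- A 3-CNF formula with `v` variables and `m` clauses: each clause is three literals,
a literal being a variable index together with a polarity (`true` = positive), and the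
three literals of every clause are on pairwise distinct variables. -/
structure CNF3 (v m : ℕ) where
  clause : Fin m → Fin 3 → Fin v × Bool
  distinctVars : ∀ i : Fin m, Function.Injective fun k : Fin 3 => (clause i k).1

/-- A truth assignment `A` satisfies the formula `φ` when every clause contains a literal
whose variable receives its polarity. -/
def CNF3.Sat {v m : ℕ} (φ : CNF3 v m) (A : Fin v → Bool) : Prop :=
  ∀ i : Fin m, ∃ k : Fin 3, A (φ.clause i k).1 = (φ.clause i k).2

/-- The variables of the Mastermind instance: the `v` original variables plus three fresh
auxiliary variables `a_i = (i,0)`, `b_i = (i,1)`, `c_i = (i,2)` for each clause `C_i`. -/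
abbrev MMVar (v m : ℕ) := Fin v ⊕ Fin m × Fin 3

/-- The positions of the single-count black-peg instance: a position `(w, true)` (written `w`)
and a position `(w, false)` (written `w̄`) for each variable `w`. -/
abbrev MMPos (v m : ℕ) := MMVar v m × Bool

/-- The position `p(ℓ)` associated with a literal `ℓ`. -/
def litPos {v m : ℕ} (ℓ : Fin v × Bool) : MMPos v m := (Sum.inl ℓ.1, ℓ.2)

/-- `chi S` is the binary code equal to `1` on `S` and `0` elsewhere. -/
def chi {P : Type*} [DecidableEq P] (S : Finset P) : P → Fin 2 :=
  fun p => if p ∈ S then 1 else 0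

/-- The guess of the type-(3) query for clause `C_i`:
ones exactly at `p(ℓ1), p(ℓ2), p(ℓ3), a_i, b_i`. -/
def clauseGuess3 {v m : ℕ} (φ : CNF3 v m) (i : Fin m) : MMPos v m → Fin 2 :=
  chi {litPos (φ.clause i 0), litPos (φ.clause i 1), litPos (φ.clause i 2),
        (Sum.inr (i, 0), true), (Sum.inr (i, 1), true)}

/-- The guess of the type-(4) query for clause `C_i`: ones exactly at `ā_i, b_i, c_i`. -/
def clauseGuess4 {v m : ℕ} (i : Fin m) : MMPos v m → Fin 2 :=
  chi {(Sum.inr (i, 0), false), (Sum.inr (i, 1), true), (Sum.inr (i, 2), true)}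

/-- `s` is a solution of the single-count black-peg query set `Q(φ)`. -/
def BlackSol {v m : ℕ} (φ : CNF3 v m) (s : MMPos v m → Fin 2) : Prop :=
  alphaCount s (chi ∅) = v + 3 * m ∧
  (∀ w : MMVar v m, alphaCount s (chi {(w, true), (w, false)}) = v + 3 * m) ∧
  (∀ i : Fin m, alphaCount s (clauseGuess3 φ i) = v + 3 * m + 1) ∧
  (∀ i : Fin m, alphaCount s (clauseGuess4 i) = v + 3 * m + 1)

/-- `s` is a solution of the full Mastermind query set of Lemma 5: the same guesses as in
`Q(φ)`, where each rating now consists of the black-peg score `α` together with the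
white-peg score `β − α`. -/
def FullSol {v m : ℕ} (φ : CNF3 v m) (s : MMPos v m → Fin 2) : Prop :=
  (alphaCount s (chi ∅) = v + 3 * m ∧
    betaCount s (chi ∅) - alphaCount s (chi ∅) = 0) ∧
  (∀ w : MMVar v m,
    alphaCount s (chi {(w, true), (w, false)}) = v + 3 * m ∧
    betaCount s (chi {(w, true), (w, false)})
      - alphaCount s (chi {(w, true), (w, false)}) = 2) ∧
  (∀ i : Fin m,
    alphaCount s (clauseGuess3 φ i) = v + 3 * m + 1 ∧
    betaCount s (clauseGuess3 φ i) - alphaCount s (clauseGuess3 φ i) = 4) ∧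
  (∀ i : Fin m,
    alphaCount s (clauseGuess4 i) = v + 3 * m + 1 ∧
    betaCount s (clauseGuess4 i) - alphaCount s (clauseGuess4 i) = 2)

lemma alphaCount_chi {P : Type*} [Fintype P] [DecidableEq P] (s : P → Fin 2) (T : Finset P) :
    alphaCount s (chi T) =
      ((Finset.univ.filter fun p => s p = 0) \ T).card +
        ((Finset.univ.filter fun p => s p = 1) ∩ T).card := by
  unfold alphaCount
  rw [← Finset.card_union_of_disjoint]
  · congr 1
    ext p
    simp only [Finset.mem_filter, Finset.mem_univ, true_and, Finset.mem_union, Finset.mem_sdiff,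
      Finset.mem_inter]
    by_cases h : p ∈ T <;> simp [chi, h]
  · rw [Finset.disjoint_left]
    intro p hp hq
    simp only [Finset.mem_sdiff, Finset.mem_inter] at hp hq
    exact hp.2 hq.2

lemma chi_comp_perm {P : Type*} [DecidableEq P] (S : Finset P) (σ : Equiv.Perm P) :
    chi S ∘ σ = chi (S.map σ.symm.toEmbedding) := by
  funext p
  simp [chi, Finset.mem_map_equiv]

lemma exists_perm_map_eq {P : Type*} [Fintype P] [DecidableEq P] {S T : Finset P}
    (h : T.card = S.card) : ∃ σ : Equiv.Perm P, S.map σ.symm.toEmbedding = T := by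
  obtain e : T ≃ S := Finset.equivOfCardEq h
  refine ⟨e.extendSubtype, ?_⟩
  apply (Finset.eq_of_subset_of_card_le _ (by simp [h])).symm
  intro p hp
  simpa [Finset.mem_map_equiv] using e.extendSubtype_mem p hp

/-- Against a code with `n` zeros and `n` ones, `β` of a guess with at most `n` ones depends only
on the number of ones of the guess. -/
lemma betaCount_chi {P : Type*} [Fintype P] [DecidableEq P] (s : P → Fin 2) (S : Finset P) (n : ℕ)
    (h0 : (Finset.univ.filter fun p => s p = 0).card = n)
    (h1 : (Finset.univ.filter fun p => s p = 1).card = n) (hS : S.card ≤ n) :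
    betaCount s (chi S) = n + S.card := by
  unfold betaCount
  apply le_antisymm
  · apply Finset.sup_le
    intro σ _
    rw [chi_comp_perm, alphaCount_chi]
    apply Nat.add_le_add
    · exact h0 ▸ Finset.card_le_card Finset.sdiff_subset
    · simpa using Finset.card_le_card (Finset.inter_subset_right
        (s₁ := Finset.univ.filter fun p => s p = 1) (s₂ := S.map σ.symm.toEmbedding))
  · obtain ⟨T, hT, hTc⟩ := Finset.exists_subset_card_eq (h1.symm ▸ hS)
    obtain ⟨σ, hσ⟩ := exists_perm_map_eq hTc
    refine le_trans (le_of_eq ?_) (Finset.le_sup (Finset.mem_univ σ))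
    rw [chi_comp_perm, hσ, alphaCount_chi, Finset.inter_eq_right.2 hT,
      Finset.sdiff_eq_self_of_disjoint, h0, hTc]
    rw [Finset.disjoint_left]
    intro p hp hq
    have := hT hq
    simp_all

theorem black_sol_iff_full_sol (v m : ℕ) (hm : 1 ≤ m) (φ : CNF3 v m)
    (s : MMPos v m → Fin 2) :
    BlackSol φ s ↔ FullSol φ s := by
  constructor
  · rintro ⟨hz, hw, h3, h4⟩
    have h0 : (Finset.univ.filter fun p => s p = 0).card = v + 3 * m := by
      simpa [alphaCount, chi] using hz
    have h1 : (Finset.univ.filter fun p => s p = 1).card = v + 3 * m := by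
      have hsum := Finset.card_filter_add_card_filter_not
        (s := (Finset.univ : Finset (MMPos v m))) (fun p => s p = 0)
      have hne : (Finset.univ.filter fun p => ¬ s p = 0) =
          (Finset.univ.filter fun p => s p = 1) := by
        ext p
        simp only [Finset.mem_filter, Finset.mem_univ, true_and]
        omega
      rw [hne, h0] at hsum
      simp at hsum
      omega
    have hv : 3 ≤ v := by
      simpa using Fintype.card_le_of_injective _ (φ.distinctVars ⟨0, hm⟩)
    have hβ := fun S hS => betaCount_chi s S (v + 3 * m) h0 h1 hS
    refine ⟨⟨hz, ?_⟩, fun w => ⟨hw w, ?_⟩, fun i => ⟨h3 i, ?_⟩, fun i => ⟨h4 i, ?_⟩⟩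
    · rw [hz, hβ _ (by simp)]
      simp
    · have hc : ({(w, true), (w, false)} : Finset (MMPos v m)).card = 2 := by
        rw [Finset.card_pair (by simp)]
      rw [hw, hβ _ (by omega), hc]
      omega
    · rw [h3]
      have h01 : (φ.clause i 0).1 ≠ (φ.clause i 1).1 :=
        (φ.distinctVars i).ne (show (0 : Fin 3) ≠ 1 by decide)
      have h02 : (φ.clause i 0).1 ≠ (φ.clause i 2).1 :=
        (φ.distinctVars i).ne (show (0 : Fin 3) ≠ 2 by decide)
      have h12 : (φ.clause i 1).1 ≠ (φ.clause i 2).1 :=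
        (φ.distinctVars i).ne (show (1 : Fin 3) ≠ 2 by decide)
      have hc : ({litPos (φ.clause i 0), litPos (φ.clause i 1), litPos (φ.clause i 2),
          (Sum.inr (i, 0), true), (Sum.inr (i, 1), true)} : Finset (MMPos v m)).card = 5 := by
        rw [Finset.card_insert_of_notMem, Finset.card_insert_of_notMem,
          Finset.card_insert_of_notMem, Finset.card_pair] <;>
          simp [litPos, h01, h02, h12]
      rw [clauseGuess3, hβ _ (by omega), hc]
      omega
    · rw [h4]
      have hc : ({(Sum.inr (i, 0), false), (Sum.inr (i, 1), true), (Sum.inr (i, 2), true)} :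
          Finset (MMPos v m)).card = 3 := by
        rw [Finset.card_insert_of_notMem, Finset.card_pair] <;> simp
      rw [clauseGuess4, hβ _ (by omega), hc]
      omega
  · rintro ⟨hz, hw, h3, h4⟩
    exact ⟨hz.1, fun w => (hw w).1, fun i => (h3 i).1, fun i => (h4 i).1⟩
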